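/- arXiv:1607.00181 — 4 statements merged into one kernel-verified Lean document; each statement's English description precedes it below -/
import Mathlib

section
/- Let H be a complex Hilbert space. The full unitary group U(H), equipped with the strong operator topology, is a bounded topological group: for every neighborhood U of the identity in U(H) (in the strong operator topology) there exists n ∈ ℕ such that every element of U(H) is a product of n elements of U. -/
open Pointwise

/-- The strong operator topology on the unitary group `U(H)` of a complex Hilbert space,
realized as the group of surjective linear isometries of `H`, i.e. the topology of
pointwise convergence on `H`. -/
noncomputable def strongOperatorTopology (H : Type*) [NormedAddCommGroup H]
    [InnerProductSpace ℂ H] : TopologicalSpace (H ≃ₗᵢ[ℂ] H) :=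
  TopologicalSpace.induced (fun u => (u : H → H)) Pi.topologicalSpace

/-!
A neighbourhood of `1` only controls finitely many vectors `x ∈ I`. Given a unitary `g`, its
restriction to the span of `I` extends to a unitary `w` of a finite-dimensional subspace `V`
containing `I` and `g(I)`. The spectrum of `w` is finite, so `arg` is continuous on it and the
functional calculus writes `w` as `exp (i a)` with `a` self-adjoint and `‖a‖ ≤ π`; hence
`r = exp (i a / n)` is an `n`-th root of `w` with `‖r - 1‖ ≤ π / n`. Extended by the identity on
`Vᗮ`, this `r` lies in the neighbourhood once `n` is large, uniformly in `g`. Since `r ^ n` agrees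
with `g` on `I`, the quotient `(r ^ n)⁻¹ * g` fixes `I` pointwise and lies in the neighbourhood too.
-/

open scoped Real

section CStarAlgebra

open Unitary selfAdjoint

variable {A : Type*} [CStarAlgebra A]

lemma expUnitary_nsmul (n : ℕ) (x : selfAdjoint A) : expUnitary (n • x) = expUnitary x ^ n := by
  ext
  simp only [expUnitary_coe, AddSubgroup.coe_nsmul, SubmonoidClass.coe_pow,
    smul_comm Complex.I n]
  let +nondep : NormedAlgebra ℚ A := .restrictScalars ℚ ℂ A
  exact NormedSpace.exp_nsmul n _

lemma norm_expUnitary_sub_one_le (x : selfAdjoint A) : ‖(expUnitary x - 1 : A)‖ ≤ ‖x‖ := by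
  nontriviality A
  rcases le_total ‖x‖ π with hx | hx
  · refine le_of_sq_le_sq ?_ (norm_nonneg x)
    rw [norm_sq_expUnitary_sub_one hx]
    linarith [Real.one_sub_sq_div_two_le_cos (x := ‖x‖)]
  · calc ‖(expUnitary x - 1 : A)‖ ≤ ‖(expUnitary x : A)‖ + ‖(1 : A)‖ := norm_sub_le _ _
      _ = 2 := by rw [CStarRing.norm_coe_unitary, norm_one, one_add_one_eq_two]
      _ ≤ ‖x‖ := Real.two_le_pi.trans hx

lemma expUnitary_argSelfAdjoint_of_continuousOn_arg {u : unitary A}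
    (hu : ContinuousOn Complex.arg (spectrum ℂ (u : A))) :
    expUnitary (argSelfAdjoint u) = u := by
  ext
  rw [expUnitary_coe, argSelfAdjoint_coe, ← CFC.exp_eq_normedSpace_exp (𝕜 := ℂ),
    ← cfc_comp_smul .., ← cfc_comp' ..]
  conv_rhs => rw [← cfc_id' ℂ (u : A)]
  refine cfc_congr fun z hz ↦ ?_
  have hz_norm : ‖z‖ = 1 := spectrum.norm_eq_one_of_unitary u.2 hz
  simpa [hz_norm, mul_comm, ← Complex.exp_eq_exp_ℂ] using Complex.norm_mul_exp_arg_mul_I z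

lemma exists_unitary_pow_eq_norm_sub_one_le {u : unitary A}
    (hu : ContinuousOn Complex.arg (spectrum ℂ (u : A))) {n : ℕ} (hn : n ≠ 0) :
    ∃ r : unitary A, r ^ n = u ∧ ‖(r - 1 : A)‖ ≤ π / n := by
  refine ⟨expUnitary ((n : ℝ)⁻¹ • argSelfAdjoint u), ?_, ?_⟩
  · rw [← expUnitary_nsmul, ← Nat.cast_smul_eq_nsmul ℝ, smul_inv_smul₀ (Nat.cast_ne_zero.2 hn),
      expUnitary_argSelfAdjoint_of_continuousOn_arg hu]
  · calc ‖(expUnitary ((n : ℝ)⁻¹ • argSelfAdjoint u) - 1 : A)‖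
        ≤ ‖(n : ℝ)⁻¹ • argSelfAdjoint u‖ := norm_expUnitary_sub_one_le _
      _ = ‖argSelfAdjoint u‖ / n := by
        rw [norm_smul, norm_inv, Real.norm_natCast, inv_mul_eq_div]
      _ ≤ π / n := by gcongr; exact norm_argSelfAdjoint_le_pi u

end CStarAlgebra

lemma finite_spectrum_continuousLinearMap {𝕜 V : Type*} [NontriviallyNormedField 𝕜]
    [CompleteSpace 𝕜] [NormedAddCommGroup V] [NormedSpace 𝕜 V] [FiniteDimensional 𝕜 V]
    (a : V →L[𝕜] V) : (spectrum 𝕜 a).Finite := by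
  rw [← AlgEquiv.spectrum_eq (Module.End.toContinuousLinearMap (𝕜 := 𝕜) V).symm a]
  exact Module.End.finite_spectrum _

lemma exists_linearIsometryEquiv_pow_eq_norm_sub_le {V : Type*} [NormedAddCommGroup V]
    [InnerProductSpace ℂ V] [FiniteDimensional ℂ V] (w : V ≃ₗᵢ[ℂ] V) {n : ℕ} (hn : n ≠ 0) :
    ∃ r : V ≃ₗᵢ[ℂ] V, r ^ n = w ∧ ∀ x, ‖r x - x‖ ≤ π / n * ‖x‖ := by
  have : CompleteSpace V := FiniteDimensional.complete ℂ V
  obtain ⟨r, hr_pow, hr_norm⟩ := exists_unitary_pow_eq_norm_sub_one_le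
    ((finite_spectrum_continuousLinearMap
      (Unitary.linearIsometryEquiv.symm w : V →L[ℂ] V)).continuousOn Complex.arg) hn
  refine ⟨Unitary.linearIsometryEquiv r, ?_, fun x ↦ ?_⟩
  · rw [← map_pow, hr_pow, MulEquiv.apply_symm_apply]
  · exact ((r : V →L[ℂ] V) - 1).le_of_opNorm_le hr_norm x

section InnerProductSpace

variable {𝕜 E : Type*} [RCLike 𝕜] [NormedAddCommGroup E] [InnerProductSpace 𝕜 E]

section OrthogonalExtension

variable (V : Submodule 𝕜 E) [V.HasOrthogonalProjection]

/-- The embedding of the unitary group of a subspace `V` into that of the ambient space `E`: a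
unitary of `V` is extended by the identity on `Vᗮ`. -/
noncomputable def orthogonalExtension : (V ≃ₗᵢ[𝕜] V) →* (E ≃ₗᵢ[𝕜] E) where
  toFun w := (V.orthogonalDecomposition.trans
    (LinearIsometryEquiv.withLpProdCongr 2 w (LinearIsometryEquiv.refl 𝕜 Vᗮ))).trans
      V.orthogonalDecomposition.symm
  map_one' := by
    ext x
    exact V.orthogonalDecomposition.symm_apply_apply x
  map_mul' w₁ w₂ := by
    ext x
    simp only [LinearIsometryEquiv.coe_mul, LinearIsometryEquiv.coe_trans, Function.comp_apply,
      LinearIsometryEquiv.apply_symm_apply]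
    rfl

lemma orthogonalExtension_apply (w : V ≃ₗᵢ[𝕜] V) (x : E) :
    orthogonalExtension V w x =
      w (V.orthogonalProjectionOnto x) + (x - V.orthogonalProjectionOnto x) := by
  simp [orthogonalExtension]

lemma orthogonalExtension_coe (w : V ≃ₗᵢ[𝕜] V) (x : V) : orthogonalExtension V w x = w x := by
  rw [orthogonalExtension_apply, V.orthogonalProjectionOnto_mem_subspace_eq_self, sub_self,
    add_zero]

lemma norm_orthogonalExtension_sub_le {w : V ≃ₗᵢ[𝕜] V} {c : ℝ} (hc : 0 ≤ c)
    (hw : ∀ y, ‖w y - y‖ ≤ c * ‖y‖) (x : E) : ‖orthogonalExtension V w x - x‖ ≤ c * ‖x‖ := by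
  set y := V.orthogonalProjectionOnto x with hy
  calc ‖orthogonalExtension V w x - x‖ = ‖w y - y‖ := by
        rw [orthogonalExtension_apply, ← hy, Submodule.coe_norm, Submodule.coe_sub]
        congr 1
        abel
    _ ≤ c * ‖y‖ := hw y
    _ ≤ c * ‖x‖ := by gcongr; exact V.norm_orthogonalProjectionOnto_apply_le x

end OrthogonalExtension

lemma exists_linearIsometryEquiv_coe_eq {F V : Submodule 𝕜 E} [FiniteDimensional 𝕜 V]
    (g : E →ₗᵢ[𝕜] E) (hF : F ≤ V) (hgF : F.map g.toLinearMap ≤ V) :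
    ∃ w : V ≃ₗᵢ[𝕜] V, ∀ x (hx : x ∈ F), (w ⟨x, hF hx⟩ : E) = g x := by
  let L : F.submoduleOf V →ₗᵢ[𝕜] V :=
    { toLinearMap := (g.toLinearMap ∘ₗ V.subtype ∘ₗ (F.submoduleOf V).subtype).codRestrict V
        fun x ↦ hgF (Submodule.mem_map_of_mem x.2)
      norm_map' := fun x ↦ g.norm_map x }
  exact ⟨L.extend.toLinearIsometryEquiv rfl,
    fun x hx ↦ congrArg Subtype.val (L.extend_apply ⟨⟨x, hF hx⟩, hx⟩)⟩

end InnerProductSpace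

open Filter Topology in
lemma hasBasis_nhds_pi_ball {ι : Type*} {X : ι → Type*} [∀ i, PseudoMetricSpace (X i)]
    (f : ∀ i, X i) :
    (𝓝 f).HasBasis (fun Iε : Set ι × ℝ ↦ Iε.1.Finite ∧ 0 < Iε.2)
      (fun Iε ↦ Iε.1.pi fun i ↦ Metric.ball (f i) Iε.2) := by
  rw [nhds_pi]
  refine hasBasis_pi_same_index (fun i ↦ Metric.nhds_basis_ball) fun I ε hI hε ↦ ?_
  have h_le : ∀ᶠ δ in 𝓝[>] (0 : ℝ), ∀ i ∈ I, δ ≤ ε i := (eventually_all_finite hI).2 fun i hi ↦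
    mem_of_superset (Ioc_mem_nhdsGT (hε i hi)) fun _ hδ ↦ hδ.2
  obtain ⟨δ, hδ_le, hδ_pos⟩ := (h_le.and self_mem_nhdsWithin).exists
  exact ⟨δ, hδ_pos, fun i hi ↦ Metric.ball_subset_ball (hδ_le i hi)⟩

section UnitaryGroup

variable {H : Type*} [NormedAddCommGroup H] [InnerProductSpace ℂ H]

lemma exists_pow_eqOn_norm_sub_le (F : Submodule ℂ H) [FiniteDimensional ℂ F]
    (g : H ≃ₗᵢ[ℂ] H) {n : ℕ} (hn : n ≠ 0) :
    ∃ r : H ≃ₗᵢ[ℂ] H, Set.EqOn (r ^ n) g F ∧ ∀ x, ‖r x - x‖ ≤ π / n * ‖x‖ := by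
  let V := F ⊔ F.map g.toLinearIsometry.toLinearMap
  obtain ⟨w, hw⟩ := exists_linearIsometryEquiv_coe_eq (V := V) g.toLinearIsometry
    le_sup_left le_sup_right
  obtain ⟨r, hr_pow, hr_norm⟩ := exists_linearIsometryEquiv_pow_eq_norm_sub_le w hn
  refine ⟨orthogonalExtension V r, fun x hx ↦ ?_,
    norm_orthogonalExtension_sub_le V (by positivity) hr_norm⟩
  rw [← map_pow, hr_pow]
  exact (orthogonalExtension_coe V w ⟨x, le_sup_left (a := F) hx⟩).trans (hw x hx)

lemma hasBasis_nhds_one_strongOperatorTopology :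
    (@nhds _ (strongOperatorTopology H) 1).HasBasis
      (fun Iε : Set H × ℝ ↦ Iε.1.Finite ∧ 0 < Iε.2)
      (fun Iε ↦ {u | ∀ x ∈ Iε.1, ‖u x - x‖ < Iε.2}) := by
  rw [strongOperatorTopology, nhds_induced]
  refine ((hasBasis_nhds_pi_ball _).comap _).congr (fun _ ↦ Iff.rfl) fun _ _ ↦ ?_
  ext u
  simp [dist_eq_norm]

theorem unitaryGroup_sot_bounded_general
    (U : Set (H ≃ₗᵢ[ℂ] H)) (hU : U ∈ @nhds _ (strongOperatorTopology H) 1) :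
    ∃ n : ℕ, ∀ g : H ≃ₗᵢ[ℂ] H, g ∈ U ^ n := by
  obtain ⟨⟨I, ε⟩, ⟨hI, hε⟩, hIU⟩ := hasBasis_nhds_one_strongOperatorTopology.mem_iff.1 hU
  obtain ⟨M, hM_pos, hM⟩ := hI.isBounded.exists_pos_norm_le
  obtain ⟨n, hn⟩ := exists_nat_gt (π * M / ε)
  have hn_pos : (0 : ℝ) < n := lt_of_le_of_lt (by positivity) hn
  have h_small : π / n * M < ε := by
    rwa [div_mul_eq_mul_div, div_lt_comm₀ hn_pos hε]
  refine ⟨n + 1, fun g ↦ ?_⟩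
  have : FiniteDimensional ℂ (Submodule.span ℂ I) := FiniteDimensional.span_of_finite ℂ hI
  obtain ⟨r, hr_eqOn, hr_norm⟩ :=
    exists_pow_eqOn_norm_sub_le (Submodule.span ℂ I) g (Nat.cast_pos.1 hn_pos).ne'
  have hrU : r ∈ U := hIU fun x hx ↦
    calc ‖r x - x‖ ≤ π / n * ‖x‖ := hr_norm x
      _ ≤ π / n * M := by gcongr; exact hM x hx
      _ < ε := h_small
  have hgU : (r ^ n)⁻¹ * g ∈ U := hIU fun x hx ↦ by
    have h_fix : ((r ^ n)⁻¹ * g) x = x := by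
      rw [LinearIsometryEquiv.coe_mul, Function.comp_apply, ← hr_eqOn (Submodule.subset_span hx)]
      exact (r ^ n).symm_apply_apply x
    rwa [h_fix, sub_self, norm_zero]
  rw [pow_succ]
  exact Set.mem_mul.2 ⟨r ^ n, Set.pow_mem_pow hrU, _, hgU, mul_inv_cancel_left _ _⟩

end UnitaryGroup

/-- The full unitary group `U(H)` of a complex Hilbert space `H`, with the
strong operator topology, is a bounded topological group: for every identity neighborhood `U`
there is `n ∈ ℕ` such that every element of `U(H)` is a product of `n` elements of `U`. -/
theorem unitaryGroup_sot_bounded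
    {H : Type*} [NormedAddCommGroup H] [InnerProductSpace ℂ H] [CompleteSpace H]
    (U : Set (H ≃ₗᵢ[ℂ] H)) (hU : U ∈ @nhds _ (strongOperatorTopology H) 1) :
    ∃ n : ℕ, ∀ g : H ≃ₗᵢ[ℂ] H, g ∈ U ^ n :=
  unitaryGroup_sot_bounded_general U hU
end

section
/- Let H be a complex Hilbert space and let G = U(H) be the full unitary group of H equipped with the strong operator topology. Then for every continuous unitary representation (π,K) of G on a complex Hilbert space K, every continuous 1-cocycle β : G → K is a 1-coboundary, i.e. H¹(G,π,K) = {0}. -/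
/-!
A bounded cocycle is a coboundary: the affine isometries `v ↦ π g v + β g` permute the bounded set
`range β`, hence fix its Chebyshev center. So it suffices to bound `‖β‖`, which is continuous and
subadditive. Continuity bounds it on the pointwise stabilizer of some finite-dimensional subspace
`F`, and, by compactness, on the unitaries supported on any given finite-dimensional subspace `E`.
For a suitable `E ⊇ F`, extending partial isometries shows that every unitary is a product of one
element of the latter kind between two of the former.
-/

open Filter Function Metric Module Set Topology

section ChebyshevCenter

/-- The Chebyshev radius of a set: the infimum of the radii of the closed balls containing it.
The value is only meaningful for nonempty bounded sets, being `0` otherwise. -/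
noncomputable def chebyshevRadius {X : Type*} [PseudoMetricSpace X] (s : Set X) : ℝ :=
  sInf {r | ∃ x, s ⊆ closedBall x r}

section PseudoMetricSpace

variable {X : Type*} [PseudoMetricSpace X] {s : Set X}

theorem zero_mem_lowerBounds_radii (hs : s.Nonempty) :
    0 ∈ lowerBounds {r | ∃ x, s ⊆ closedBall x r} := by
  rintro r ⟨x, hx⟩
  exact nonempty_closedBall.1 (hs.mono hx)

theorem chebyshevRadius_nonneg (hs : s.Nonempty) : 0 ≤ chebyshevRadius s :=
  Real.sInf_nonneg (zero_mem_lowerBounds_radii hs)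

theorem chebyshevRadius_le (hs : s.Nonempty) {x : X} {r : ℝ} (hx : s ⊆ closedBall x r) :
    chebyshevRadius s ≤ r :=
  csInf_le ⟨0, zero_mem_lowerBounds_radii hs⟩ ⟨x, hx⟩

theorem exists_subset_closedBall_of_chebyshevRadius_lt (hs : s.Nonempty)
    (hb : Bornology.IsBounded s) {r : ℝ} (hr : chebyshevRadius s < r) :
    ∃ x, s ⊆ closedBall x r := by
  obtain ⟨x₀, -⟩ := hs
  obtain ⟨r₀, hr₀⟩ := hb.subset_closedBall x₀
  have hne : {r | ∃ x, s ⊆ closedBall x r}.Nonempty := ⟨r₀, x₀, hr₀⟩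
  obtain ⟨r', ⟨x, hx⟩, hr'⟩ := exists_lt_of_csInf_lt hne hr
  exact ⟨x, hx.trans (closedBall_subset_closedBall hr'.le)⟩

end PseudoMetricSpace

variable {V : Type*} [NormedAddCommGroup V] [InnerProductSpace ℝ V] {s : Set V}

theorem dist_sq_le_of_subset_closedBall (hs : s.Nonempty) {x y : V} {a b : ℝ}
    (hx : s ⊆ closedBall x a) (hy : s ⊆ closedBall y b) :
    dist x y ^ 2 ≤ 2 * (a ^ 2 - chebyshevRadius s ^ 2) + 2 * (b ^ 2 - chebyshevRadius s ^ 2) := by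
  have hmid : ∀ z ∈ s,
      dist z (midpoint ℝ x y) ^ 2 ≤ (a ^ 2 + b ^ 2) / 2 - (dist x y / 2) ^ 2 := by
    intro z hz
    have hxz : dist z x ^ 2 ≤ a ^ 2 := by gcongr; exact hx hz
    have hyz : dist z y ^ 2 ≤ b ^ 2 := by gcongr; exact hy hz
    have apollonius :=
      EuclideanGeometry.dist_sq_add_dist_sq_eq_two_mul_dist_midpoint_sq_add_half_dist_sq z x y
    linarith
  have ⟨z, hz⟩ := hs
  have hradius := chebyshevRadius_le hs fun w hw => Real.le_sqrt_of_sq_le (hmid w hw)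
  rw [Real.le_sqrt (chebyshevRadius_nonneg hs) ((sq_nonneg _).trans (hmid z hz))] at hradius
  linarith

theorem exists_subset_closedBall_chebyshevRadius [CompleteSpace V] (hs : s.Nonempty)
    (hb : Bornology.IsBounded s) : ∃ c, s ⊆ closedBall c (chebyshevRadius s) := by
  set R := chebyshevRadius s
  let ε : ℕ → ℝ := fun n => 1 / (n + 1)
  have hε : Tendsto ε atTop (𝓝 0) := tendsto_one_div_add_atTop_nhds_zero_nat
  have happrox (n : ℕ) : ∃ x, s ⊆ closedBall x (R + ε n) :=
    exists_subset_closedBall_of_chebyshevRadius_lt hs hb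
      (lt_add_of_pos_right _ Nat.one_div_pos_of_nat)
  choose x hx using happrox
  have hcauchy : CauchySeq x := by
    refine cauchySeq_of_le_tendsto_0' (fun n => √(4 * ((R + ε n) ^ 2 - R ^ 2))) ?_ ?_
    · intro n m hnm
      have hR : 0 ≤ R + ε m := add_nonneg (chebyshevRadius_nonneg hs) Nat.one_div_pos_of_nat.le
      have hle : (R + ε m) ^ 2 ≤ (R + ε n) ^ 2 := by
        gcongr
        exact Nat.one_div_le_one_div hnm
      have hdist := dist_sq_le_of_subset_closedBall hs (hx n) (hx m)
      exact Real.le_sqrt_of_sq_le (by linarith)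
    · have hlim := ((((hε.const_add R).pow 2).sub_const (R ^ 2)).const_mul 4).sqrt
      rwa [add_zero, sub_self, mul_zero, Real.sqrt_zero] at hlim
  obtain ⟨c, hc⟩ := cauchySeq_tendsto_of_complete hcauchy
  refine ⟨c, fun z hz => ?_⟩
  have hlim : Tendsto (fun n => R + ε n) atTop (𝓝 R) := by simpa using hε.const_add R
  exact le_of_tendsto_of_tendsto' (tendsto_const_nhds.dist hc) hlim fun n => hx n hz

theorem existsUnique_subset_closedBall_chebyshevRadius [CompleteSpace V] (hs : s.Nonempty)
    (hb : Bornology.IsBounded s) : ∃! c, s ⊆ closedBall c (chebyshevRadius s) := by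
  refine existsUnique_of_exists_of_unique (exists_subset_closedBall_chebyshevRadius hs hb)
    fun x y hx hy => ?_
  have hdist := dist_sq_le_of_subset_closedBall hs hx hy
  simp only [sub_self, mul_zero, add_zero] at hdist
  exact dist_eq_zero.1 (pow_eq_zero_iff two_ne_zero |>.1 (hdist.antisymm (sq_nonneg _)))

theorem exists_forall_isometry_fixed [CompleteSpace V] (hs : s.Nonempty)
    (hb : Bornology.IsBounded s) : ∃ c, ∀ f : V → V, Isometry f → f '' s = s → f c = c := by
  obtain ⟨c, hc, hunique⟩ := existsUnique_subset_closedBall_chebyshevRadius hs hb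
  refine ⟨c, fun f hf hfs => hunique _ ?_⟩
  calc s = f '' s := hfs.symm
    _ ⊆ f '' closedBall c (chebyshevRadius s) := image_mono hc
    _ ⊆ closedBall (f c) (chebyshevRadius s) := (hf.mapsTo_closedBall c _).image_subset

end ChebyshevCenter

section Cocycle

variable {𝕜 K G : Type*} [RCLike 𝕜] [NormedAddCommGroup K] [InnerProductSpace 𝕜 K] [Group G]

theorem exists_eq_sub_of_isBounded_range_cocycle [CompleteSpace K] (π : G →* (K ≃ₗᵢ[𝕜] K))
    {β : G → K} (hβ : ∀ g h, β (g * h) = β g + π g (β h))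
    (hb : Bornology.IsBounded (range β)) : ∃ v, ∀ g, β g = π g v - v := by
  let := InnerProductSpace.rclikeToReal 𝕜 K
  obtain ⟨c, hc⟩ := exists_forall_isometry_fixed (range_nonempty β) hb
  refine ⟨-c, fun g => ?_⟩
  have himage : (fun v => β g + π g v) '' range β = range β := by
    rw [← range_comp]
    simp only [comp_def, ← hβ]
    exact (Equiv.mulLeft g).surjective.range_comp β
  have hfixed : β g + π g c = c :=
    hc _ ((isometry_add_left (β g)).comp (π g).isometry) himage
  rw [map_neg, sub_neg_eq_add, neg_add_eq_sub, eq_sub_iff_add_eq, hfixed]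

end Cocycle

section PartialIsometry

variable {𝕜 : Type*} [RCLike 𝕜]

theorem nonempty_linearIsometry_of_finrank_le {V W : Type*} [NormedAddCommGroup V]
    [InnerProductSpace 𝕜 V] [FiniteDimensional 𝕜 V] [NormedAddCommGroup W]
    [InnerProductSpace 𝕜 W] [FiniteDimensional 𝕜 W] (h : finrank 𝕜 V ≤ finrank 𝕜 W) :
    Nonempty (V →ₗᵢ[𝕜] W) := by
  let b := stdOrthonormalBasis 𝕜 V
  let c := stdOrthonormalBasis 𝕜 W
  let f : V →ₗ[𝕜] W := b.toBasis.constr 𝕜 (c ∘ Fin.castLE h)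
  have hf : f ∘ b.toBasis = c ∘ Fin.castLE h := by
    ext i
    simp only [comp_apply, f, Basis.constr_basis]
  have hb : Orthonormal 𝕜 b.toBasis := by simpa only [b.coe_toBasis] using b.orthonormal
  exact ⟨f.isometryOfOrthonormal hb (hf ▸ c.orthonormal.comp _ (Fin.castLE_injective h))⟩

theorem exists_linearIsometry_comp_eq {S V W : Type*} [NormedAddCommGroup S]
    [InnerProductSpace 𝕜 S] [NormedAddCommGroup V] [InnerProductSpace 𝕜 V]
    [FiniteDimensional 𝕜 V] [NormedAddCommGroup W] [InnerProductSpace 𝕜 W]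
    [FiniteDimensional 𝕜 W] (h : finrank 𝕜 V ≤ finrank 𝕜 W) (i : S →ₗᵢ[𝕜] V) (f : S →ₗᵢ[𝕜] W) :
    ∃ j : V →ₗᵢ[𝕜] W, ∀ x, j (i x) = f x := by
  obtain ⟨l⟩ := nonempty_linearIsometry_of_finrank_le h
  -- Correct `l` by an isometry of `W` that sends each `l (i x)` to `f x`.
  let e := (l.comp i).equivRange
  refine ⟨(f.comp e.symm.toLinearIsometry).extend.comp l, fun x => ?_⟩
  calc (f.comp e.symm.toLinearIsometry).extend (e x) = f (e.symm (e x)) :=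
        LinearIsometry.extend_apply _ _
    _ = f x := by rw [e.symm_apply_apply]

variable {H : Type*} [NormedAddCommGroup H] [InnerProductSpace 𝕜 H]

/-- The inclusion between nested subspaces, as a linear isometry. -/
def inclusionIsometry {S T : Submodule 𝕜 H} (h : S ≤ T) : S →ₗᵢ[𝕜] T :=
  ⟨Submodule.inclusion h, fun _ => rfl⟩

/-- The extension of a unitary of a subspace `T` to the whole space by the identity on `Tᗮ`. -/
noncomputable def extendByIdentity (T : Submodule 𝕜 H) [T.HasOrthogonalProjection]
    (k : T ≃ₗᵢ[𝕜] T) : H ≃ₗᵢ[𝕜] H :=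
  T.orthogonalDecomposition.trans
    ((LinearIsometryEquiv.withLpProdCongr 2 k (.refl 𝕜 Tᗮ)).trans T.orthogonalDecomposition.symm)

theorem extendByIdentity_apply (T : Submodule 𝕜 H) [T.HasOrthogonalProjection]
    (k : T ≃ₗᵢ[𝕜] T) (x : H) :
    extendByIdentity T k x = k (T.orthogonalProjectionOnto x) + Tᗮ.orthogonalProjectionOnto x := by
  simp [extendByIdentity]

theorem extendByIdentity_coe (T : Submodule 𝕜 H) [T.HasOrthogonalProjection] (k : T ≃ₗᵢ[𝕜] T)
    (x : T) : extendByIdentity T k x = k x := by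
  simp [extendByIdentity_apply]

theorem exists_extendByIdentity_eq {S T : Submodule 𝕜 H} [FiniteDimensional 𝕜 T] (hST : S ≤ T)
    (f : S →ₗᵢ[𝕜] T) : ∃ k : T ≃ₗᵢ[𝕜] T, ∀ x : S, extendByIdentity T k x = f x := by
  obtain ⟨j, hj⟩ := exists_linearIsometry_comp_eq le_rfl (inclusionIsometry hST) f
  refine ⟨j.toLinearIsometryEquiv rfl, fun x => ?_⟩
  calc extendByIdentity T (j.toLinearIsometryEquiv rfl) (inclusionIsometry hST x)
      = j (inclusionIsometry hST x) := extendByIdentity_coe T _ _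
    _ = f x := congrArg Subtype.val (hj x)

theorem exists_linearIsometryEquiv_extending {S T : Submodule 𝕜 H} [FiniteDimensional 𝕜 S]
    [FiniteDimensional 𝕜 T] (f : S →ₗᵢ[𝕜] T) : ∃ w : H ≃ₗᵢ[𝕜] H, ∀ x : S, w x = f x := by
  obtain ⟨k, hk⟩ := exists_extendByIdentity_eq (le_sup_left : S ≤ S ⊔ T)
    ((inclusionIsometry le_sup_right).comp f)
  exact ⟨extendByIdentity (S ⊔ T) k, hk⟩

end PartialIsometry

section Decomposition

theorem exists_finiteDimensional_ge_forall_finrank_le {k V : Type*} [DivisionRing k]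
    [AddCommGroup V] [Module k V] (F : Submodule k V) [FiniteDimensional k F] (n : ℕ) :
    ∃ E : Submodule k V, FiniteDimensional k E ∧ F ≤ E ∧
      ∀ S : Submodule k V, FiniteDimensional k S → finrank k S ≤ n → finrank k S ≤ finrank k E := by
  let dims : Set ℕ := {d | d ≤ n ∧ ∃ S : Submodule k V, FiniteDimensional k S ∧ finrank k S = d}
  have hbdd : BddAbove dims := ⟨n, fun d hd => hd.1⟩
  have hne : dims.Nonempty := ⟨0, n.zero_le, ⊥, inferInstance, finrank_bot k V⟩
  obtain ⟨-, M, hMfin, hM⟩ := Nat.sSup_mem hne hbdd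
  refine ⟨F ⊔ M, inferInstance, le_sup_left, fun S hSfin hS => ?_⟩
  calc finrank k S ≤ sSup dims := le_csSup hbdd ⟨hS, S, hSfin, rfl⟩
    _ = finrank k M := hM.symm
    _ ≤ finrank k (F ⊔ M : Submodule k V) := Submodule.finrank_mono le_sup_right

variable {𝕜 H : Type*} [RCLike 𝕜] [NormedAddCommGroup H] [InnerProductSpace 𝕜 H]

theorem exists_finiteDimensional_forall_exists_map_mem (F : Submodule 𝕜 H)
    [FiniteDimensional 𝕜 F] :
    ∃ E : Submodule 𝕜 H, FiniteDimensional 𝕜 E ∧ F ≤ E ∧ ∀ u : H ≃ₗᵢ[𝕜] H,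
      ∃ w : H ≃ₗᵢ[𝕜] H, (∀ x ∈ F, w x = x) ∧ ∀ x ∈ F, w (u x) ∈ E := by
  obtain ⟨E, hEfin, hFE, hE⟩ :=
    exists_finiteDimensional_ge_forall_finrank_le F (finrank 𝕜 F + finrank 𝕜 F)
  refine ⟨E, hEfin, hFE, fun u => ?_⟩
  let uF : Submodule 𝕜 H := F.map (u.toLinearEquiv : H →ₗ[𝕜] H)
  have hdim : finrank 𝕜 (F ⊔ uF : Submodule 𝕜 H) ≤ finrank 𝕜 E := by
    refine hE _ inferInstance ((Submodule.finrank_add_le_finrank_add_finrank F uF).trans ?_)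
    gcongr
    exact Submodule.finrank_map_le _ F
  obtain ⟨j, hj⟩ := exists_linearIsometry_comp_eq hdim
    (inclusionIsometry le_sup_left) (inclusionIsometry hFE)
  obtain ⟨w, hw⟩ := exists_linearIsometryEquiv_extending j
  refine ⟨w, fun x hx => ?_, fun x hx => ?_⟩
  · exact (hw (inclusionIsometry le_sup_left ⟨x, hx⟩)).trans (congrArg Subtype.val (hj ⟨x, hx⟩))
  · have hux : u x ∈ F ⊔ uF := Submodule.mem_sup_right ⟨x, hx, rfl⟩
    exact hw ⟨u x, hux⟩ ▸ (j ⟨u x, hux⟩).2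

theorem exists_finiteDimensional_forall_eq_mul_extendByIdentity_mul (F : Submodule 𝕜 H)
    [FiniteDimensional 𝕜 F] :
    ∃ (E : Submodule 𝕜 H) (_ : FiniteDimensional 𝕜 E), ∀ u : H ≃ₗᵢ[𝕜] H,
      ∃ (w₁ w₂ : H ≃ₗᵢ[𝕜] H) (k : E ≃ₗᵢ[𝕜] E), (∀ x ∈ F, w₁ x = x) ∧ (∀ x ∈ F, w₂ x = x) ∧
        u = w₁ * extendByIdentity E k * w₂ := by
  obtain ⟨E, hEfin, hFE, hE⟩ := exists_finiteDimensional_forall_exists_map_mem F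
  refine ⟨E, hEfin, fun u => ?_⟩
  obtain ⟨w, hwF, hwu⟩ := hE u
  obtain ⟨k, hk⟩ := exists_extendByIdentity_eq hFE
    ⟨((w * u).toLinearEquiv : H →ₗ[𝕜] H).restrict hwu, fun x => (w * u).norm_map x⟩
  let κ := extendByIdentity E k
  refine ⟨w⁻¹, κ⁻¹ * (w * u), k, fun x hx => ?_, fun x hx => ?_, by simp only [κ]; group⟩
  · exact w.symm_apply_eq.2 (hwF x hx).symm
  · exact κ.symm_apply_eq.2 (hk ⟨x, hx⟩).symm

end Decomposition

section PointwiseTopology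

theorem compactSpace_unitary_continuousLinearMap (𝕜 T : Type*) [RCLike 𝕜] [NormedAddCommGroup T]
    [InnerProductSpace 𝕜 T] [FiniteDimensional 𝕜 T] [CompleteSpace T] :
    CompactSpace (unitary (T →L[𝕜] T)) := by
  have : ProperSpace (T →L[𝕜] T) := FiniteDimensional.proper 𝕜 _
  refine isCompact_iff_compactSpace.1 (isCompact_of_isClosed_isBounded isClosed_unitary ?_)
  refine isBounded_closedBall (x := 0) (r := 1) |>.subset fun A hA => ?_
  rw [mem_closedBall_zero_iff]
  refine A.opNorm_le_bound zero_le_one fun x => ?_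
  rw [ContinuousLinearMap.norm_map_of_mem_unitary hA, one_mul]

variable {𝕜 H : Type*} [RCLike 𝕜] [NormedAddCommGroup H] [InnerProductSpace 𝕜 H]
  [TopologicalSpace (H ≃ₗᵢ[𝕜] H)]

theorem isCompact_range_extendByIdentity
    (hcoe : IsInducing fun (u : H ≃ₗᵢ[𝕜] H) (x : H) => u x) (T : Submodule 𝕜 H)
    [FiniteDimensional 𝕜 T] : IsCompact (range (extendByIdentity T)) := by
  have := compactSpace_unitary_continuousLinearMap 𝕜 T
  have hcont : Continuous (extendByIdentity T ∘ Unitary.linearIsometryEquiv) := by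
    refine hcoe.continuous_iff.2 (continuous_pi fun x => ?_)
    simp only [comp_apply, extendByIdentity_apply]
    change Continuous fun A : unitary (T →L[𝕜] T) =>
      (((A : T →L[𝕜] T) (T.orthogonalProjectionOnto x) : T) : H) + Tᗮ.orthogonalProjectionOnto x
    fun_prop
  rw [← Unitary.linearIsometryEquiv.surjective.range_comp (extendByIdentity T)]
  exact isCompact_range hcont

theorem exists_finiteDimensional_forall_fixing_mem
    (hcoe : IsInducing fun (u : H ≃ₗᵢ[𝕜] H) (x : H) => u x) {U : Set (H ≃ₗᵢ[𝕜] H)}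
    (hU : U ∈ 𝓝 1) : ∃ F : Submodule 𝕜 H, FiniteDimensional 𝕜 F ∧
      ∀ u : H ≃ₗᵢ[𝕜] H, (∀ x ∈ F, u x = x) → u ∈ U := by
  rw [hcoe.nhds_eq_comap, mem_comap] at hU
  obtain ⟨U', hU', hsub⟩ := hU
  rw [nhds_pi, mem_pi'] at hU'
  obtain ⟨I, t, ht, htU'⟩ := hU'
  refine ⟨Submodule.span 𝕜 I, FiniteDimensional.span_finset 𝕜 I, fun u hu => ?_⟩
  refine hsub (htU' fun x hx => ?_)
  simpa only [hu x (Submodule.subset_span hx), LinearIsometryEquiv.coe_one, id_eq] using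
    mem_of_mem_nhds (ht x)

theorem bddAbove_range_of_continuous_of_subadditive
    (hcoe : IsInducing fun (u : H ≃ₗᵢ[𝕜] H) (x : H) => u x) {l : (H ≃ₗᵢ[𝕜] H) → ℝ}
    (hcont : Continuous l) (hmul : ∀ g h, l (g * h) ≤ l g + l h) : BddAbove (range l) := by
  obtain ⟨F, hFfin, hF⟩ := exists_finiteDimensional_forall_fixing_mem hcoe
    (hcont.continuousAt.eventually_lt_const (lt_add_one (l 1)))
  obtain ⟨E, hEfin, hE⟩ := exists_finiteDimensional_forall_eq_mul_extendByIdentity_mul F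
  obtain ⟨C, hC⟩ := (isCompact_range_extendByIdentity hcoe E).bddAbove_image hcont.continuousOn
  refine ⟨l 1 + 1 + C + (l 1 + 1), ?_⟩
  rintro _ ⟨u, rfl⟩
  obtain ⟨w₁, w₂, k, hw₁, hw₂, rfl⟩ := hE u
  calc l (w₁ * extendByIdentity E k * w₂)
      ≤ l w₁ + l (extendByIdentity E k) + l w₂ := by grw [hmul, hmul]
    _ ≤ l 1 + 1 + C + (l 1 + 1) := by
      gcongr
      · exact (hF w₁ hw₁).le
      · exact hC (mem_image_of_mem l (mem_range_self k))
      · exact (hF w₂ hw₂).le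

end PointwiseTopology

theorem unitaryGroup_sot_firstCohomology_vanishes_general
    {𝕜 𝕜' H K : Type*} [RCLike 𝕜] [RCLike 𝕜'] [NormedAddCommGroup H] [InnerProductSpace 𝕜 H]
    [NormedAddCommGroup K] [InnerProductSpace 𝕜' K] [CompleteSpace K]
    [TopologicalSpace (H ≃ₗᵢ[𝕜] H)] (hcoe : IsInducing fun (u : H ≃ₗᵢ[𝕜] H) (x : H) => u x)
    (π : (H ≃ₗᵢ[𝕜] H) →* (K ≃ₗᵢ[𝕜'] K)) {β : (H ≃ₗᵢ[𝕜] H) → K} (hβcont : Continuous β)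
    (hβcoc : ∀ g h, β (g * h) = β g + π g (β h)) :
    ∃ v : K, ∀ g, β g = π g v - v := by
  have hsubadd (g h : H ≃ₗᵢ[𝕜] H) : ‖β (g * h)‖ ≤ ‖β g‖ + ‖β h‖ := by
    rw [hβcoc, ← (π g).norm_map (β h)]
    exact norm_add_le _ _
  obtain ⟨C, hC⟩ := bddAbove_range_of_continuous_of_subadditive hcoe hβcont.norm hsubadd
  refine exists_eq_sub_of_isBounded_range_cocycle π hβcoc (isBounded_iff_forall_norm_le.2 ⟨C, ?_⟩)
  rintro _ ⟨g, rfl⟩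
  exact hC (mem_range_self g)

/-- For the full unitary group `G = U(H)` of a complex Hilbert space `H`,
equipped with the strong operator topology, every continuous 1-cocycle of any continuous
unitary representation `(π, K)` of `G` is a 1-coboundary, i.e. `H¹(G, π, K) = {0}`. -/
theorem unitaryGroup_sot_firstCohomology_vanishes
    {H : Type*} [NormedAddCommGroup H] [InnerProductSpace ℂ H] [CompleteSpace H]
    {K : Type*} [NormedAddCommGroup K] [InnerProductSpace ℂ K] [CompleteSpace K]
    -- `(π, K)` is a continuous unitary representation of `U(H)` with the SOT:
    (π : (H ≃ₗᵢ[ℂ] H) →* (K ≃ₗᵢ[ℂ] K))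
    (hπ : ∀ v : K, @Continuous _ _ (strongOperatorTopology H) _ fun g => π g v)
    -- `β` is a continuous 1-cocycle:
    (β : (H ≃ₗᵢ[ℂ] H) → K) (hβcont : @Continuous _ _ (strongOperatorTopology H) _ β)
    (hβcoc : ∀ g h : H ≃ₗᵢ[ℂ] H, β (g * h) = β g + π g (β h)) :
    -- then `β` is a 1-coboundary:
    ∃ v : K, ∀ g : H ≃ₗᵢ[ℂ] H, β g = π g v - v := by
  let := strongOperatorTopology H
  exact unitaryGroup_sot_firstCohomology_vanishes_general ⟨rfl⟩ π hβcont hβcoc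
end

section
/- Fix n ∈ ℕ and, for an integer tuple μ, say that μ has property (P) if #{j : μ_j ≥ 0} ≥ n and #{j : μ_j ≤ 0} ≥ n. Then for every k ≥ n and every decreasingly ordered tuple λ = (λ_1 ≥ λ_2 ≥ … ≥ λ_{k+1}) ∈ ℤ^{k+1}, λ has property (P) if and only if there exists a decreasingly ordered tuple η = (η_1 ≥ … ≥ η_k) ∈ ℤ^k interlacing λ, i.e. λ_1 ≥ η_1 ≥ λ_2 ≥ η_2 ≥ … ≥ λ_k ≥ η_k ≥ λ_{k+1}, such that η has property (P). (That is, property (P) is interlacing-inheritable.) -/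
/-!
Property (P) passes from an interlacing tuple `η` up to `μ` because `0 ≤ η i` forces
`0 ≤ μ i.castSucc` and `η i ≤ 0` forces `μ i.succ ≤ 0`. Conversely, let `η i` be the point of the
interval `[μ i.succ, μ i.castSucc]` nearest to zero, which makes sense in any lattice as
`μ i.succ ⊔ (μ i.castSucc ⊓ 0)`. Then `0 ≤ η i` as soon as `0 ≤ μ i.castSucc`, so a nonnegative
entry is lost only if the last entry of `μ` is nonnegative; but then all entries are nonnegative
and the remaining `k ≥ n` of them suffice. The nonpositive entries are treated in the same way,
with the first entry of `μ` in place of the last.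
-/

open scoped Finset in
theorem le_card_filter_comp_of_forall_ne_mem_range {ι κ : Type*} [Fintype ι] [Fintype κ]
    {P : ι → Prop} [DecidablePred P] {f : κ → ι} {p : ι} {n : ℕ} (hf : ∀ j ≠ p, j ∈ Set.range f)
    (hP : P p → ∀ j, P j) (hn : n ≤ Fintype.card κ) (h : n ≤ #{j | P j}) :
    n ≤ #{i | P (f i)} := by
  by_cases hp : P p
  · simpa [hP hp] using hn
  · refine h.trans (Finset.card_le_card_of_surjOn f fun j hj ↦ ?_)
    have hPj : P j := by simpa using hj
    obtain ⟨i, rfl⟩ := hf j fun hjp ↦ hp (hjp ▸ hPj)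
    exact ⟨i, by simpa using hPj, rfl⟩

section Interlacing

open scoped Finset

variable {α : Type*} {k : ℕ} {a b c : α} {η : Fin k → α} {μ : Fin (k + 1) → α}

/-- The interlacing relation `μ 0 ≥ η 0 ≥ μ 1 ≥ η 1 ≥ ⋯ ≥ η (k - 1) ≥ μ k`, which
forces both tuples to be decreasing. -/
def Interlaces [LE α] (η : Fin k → α) (μ : Fin (k + 1) → α) : Prop :=
  ∀ i, η i ≤ μ i.castSucc ∧ μ i.succ ≤ η i

/-- Property (P), with separate thresholds and multiplicities for its two halves: at least `p`
entries are `≥ a` and at least `q` entries are `≤ b`. The original property has `p = q = n` and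
`a = b = 0`. -/
def PropertyP [LE α] [DecidableLE α] (p q : ℕ) (a b : α) (μ : Fin k → α) : Prop :=
  p ≤ #{j | a ≤ μ j} ∧ q ≤ #{j | μ j ≤ b}

/-- The tuple whose `i`-th entry is the projection of `c` to the interval
`[μ i.succ, μ i.castSucc]`; for decreasing `μ` it interlaces `μ` and inherits property (P). -/
def interlacingClamp [Lattice α] (c : α) (μ : Fin (k + 1) → α) (i : Fin k) : α :=
  μ i.succ ⊔ μ i.castSucc ⊓ c

section Preorder

variable [Preorder α] [DecidableLE α] {p q : ℕ}

theorem Interlaces.card_filter_ge_le (h : Interlaces η μ) (a : α) :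
    #{i | a ≤ η i} ≤ #{j | a ≤ μ j} := by
  refine Finset.card_le_card_of_injOn Fin.castSucc (fun i hi ↦ ?_) (Fin.castSucc_injective k).injOn
  have hai : a ≤ η i := by simpa using hi
  simpa using hai.trans (h i).1

theorem Interlaces.card_filter_le_le (h : Interlaces η μ) (b : α) :
    #{i | η i ≤ b} ≤ #{j | μ j ≤ b} := by
  refine Finset.card_le_card_of_injOn Fin.succ (fun i hi ↦ ?_) (Fin.succ_injective k).injOn
  have hib : η i ≤ b := by simpa using hi
  simpa using (h i).2.trans hib

theorem PropertyP.of_interlaces (hη : PropertyP p q a b η) (h : Interlaces η μ) :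
    PropertyP p q a b μ :=
  ⟨hη.1.trans (h.card_filter_ge_le a), hη.2.trans (h.card_filter_le_le b)⟩

theorem le_card_filter_ge_castSucc (hμ : Antitone μ) (hp : p ≤ k)
    (h : p ≤ #{j | a ≤ μ j}) : p ≤ #{i : Fin k | a ≤ μ i.castSucc} := by
  have all_ge (hlast : a ≤ μ (Fin.last k)) (j) : a ≤ μ j := hlast.trans (hμ j.le_last)
  exact le_card_filter_comp_of_forall_ne_mem_range (P := (a ≤ μ ·))
    (fun _ ↦ Fin.exists_castSucc_eq.mpr) all_ge (by simpa using hp) h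

theorem le_card_filter_le_succ (hμ : Antitone μ) (hq : q ≤ k)
    (h : q ≤ #{j | μ j ≤ b}) : q ≤ #{i : Fin k | μ i.succ ≤ b} := by
  have all_le (hzero : μ 0 ≤ b) (j) : μ j ≤ b := (hμ j.zero_le).trans hzero
  exact le_card_filter_comp_of_forall_ne_mem_range (P := (μ · ≤ b))
    (fun _ ↦ Fin.exists_succ_eq.mpr) all_le (by simpa using hq) h

end Preorder

section Lattice

variable [Lattice α] {i : Fin k}

theorem le_interlacingClamp (hac : a ≤ c) (h : a ≤ μ i.castSucc) : a ≤ interlacingClamp c μ i :=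
  (le_inf h hac).trans le_sup_right

theorem interlacingClamp_le (hcb : c ≤ b) (h : μ i.succ ≤ b) : interlacingClamp c μ i ≤ b :=
  sup_le h (inf_le_right.trans hcb)

theorem antitone_interlacingClamp (hμ : Antitone μ) (c : α) : Antitone (interlacingClamp c μ) :=
  fun _ _ hij ↦ sup_le_sup (hμ (Fin.succ_le_succ_iff.mpr hij))
    (inf_le_inf_right c (hμ (Fin.castSucc_le_castSucc_iff.mpr hij)))

theorem interlaces_interlacingClamp (hμ : Antitone μ) (c : α) :
    Interlaces (interlacingClamp c μ) μ :=
  fun i ↦ ⟨sup_le (hμ i.castSucc_lt_succ.le) inf_le_left, le_sup_left⟩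

variable [DecidableLE α] {p q : ℕ}

theorem propertyP_interlacingClamp (h : PropertyP p q a b μ) (hμ : Antitone μ) (hp : p ≤ k)
    (hq : q ≤ k) (hac : a ≤ c) (hcb : c ≤ b) : PropertyP p q a b (interlacingClamp c μ) := by
  constructor
  · calc
      p ≤ #{i : Fin k | a ≤ μ i.castSucc} := le_card_filter_ge_castSucc hμ hp h.1
      _ ≤ #{i | a ≤ interlacingClamp c μ i} :=
        Finset.card_le_card <| Finset.monotone_filter_right _ fun _ _ ↦ le_interlacingClamp hac
  · calc
      q ≤ #{i : Fin k | μ i.succ ≤ b} := le_card_filter_le_succ hμ hq h.2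
      _ ≤ #{i | interlacingClamp c μ i ≤ b} :=
        Finset.card_le_card <| Finset.monotone_filter_right _ fun _ _ ↦ interlacingClamp_le hcb

theorem property_P_interlacing_inheritable_general (hp : p ≤ k) (hq : q ≤ k) (hab : a ≤ b)
    (hμ : Antitone μ) :
    PropertyP p q a b μ ↔
      ∃ η : Fin k → α, Antitone η ∧ Interlaces η μ ∧ PropertyP p q a b η := by
  constructor
  · intro h
    exact ⟨interlacingClamp a μ, antitone_interlacingClamp hμ a, interlaces_interlacingClamp hμ a,
      propertyP_interlacingClamp h hμ hp hq le_rfl hab⟩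
  · rintro ⟨η, -, hinter, hη⟩
    exact hη.of_interlaces hinter

end Lattice

end Interlacing

/-- Fix `n`.  For an integer tuple `μ`, property (P) says that at least `n`
entries of `μ` are `≥ 0` and at least `n` entries are `≤ 0`.  For every `k ≥ n` and every
decreasingly ordered `λ ∈ ℤ^{k+1}`, `λ` has property (P) if and only if there is a decreasingly
ordered `η ∈ ℤ^k` interlacing `λ` (i.e. `λ₁ ≥ η₁ ≥ λ₂ ≥ … ≥ λ_k ≥ η_k ≥ λ_{k+1}`) which has
property (P).  In other words, property (P) is interlacing-inheritable. -/
theorem property_P_interlacing_inheritable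
    (n k : ℕ) (hnk : n ≤ k) (lam : Fin (k + 1) → ℤ) (hlam : Antitone lam) :
    (n ≤ (Finset.univ.filter fun j => 0 ≤ lam j).card ∧
      n ≤ (Finset.univ.filter fun j => lam j ≤ 0).card)
    ↔ ∃ eta : Fin k → ℤ, Antitone eta ∧
        (∀ i : Fin k, eta i ≤ lam i.castSucc ∧ lam i.succ ≤ eta i) ∧
        (n ≤ (Finset.univ.filter fun j => 0 ≤ eta j).card ∧
          n ≤ (Finset.univ.filter fun j => eta j ≤ 0).card) :=
  property_P_interlacing_inheritable_general hnk hnk le_rfl hlam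
end

section
/- Let H = ℓ²(ℕ,ℂ) with standard Hilbert basis (e_k)_{k∈ℕ}, and let G be the group of all unitary operators u on H such that u e_k = e_k for all but finitely many k (a realization of U(∞)). Define β : G → H by β(u) := Σ_k (u e_k − e_k), a sum with only finitely many nonzero terms. Then β satisfies the 1-cocycle relation β(uv) = β(u) + u β(v) for all u,v ∈ G, its restriction to each subgroup G_N := {u ∈ G : u e_k = e_k for all k > N} is the coboundary u ↦ u v_N − v_N with v_N = Σ_{k≤N} e_k, but there exists no vector v ∈ H with β(u) = u v − v for all u ∈ G. In particular, the first cohomology of the natural representation of U(∞) on ℓ²(ℕ,ℂ) (the highest weight representation with weight λ = (1,0,0,…)) does not vanish. -/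
/-!
Since `u (v e) - e = (u e - e) + u (v e - e)`, summing over the family `e` gives the cocycle
relation, and on the isometries fixing every `e k` outside a finite set `s` additivity makes it the
coboundary of `∑ k ∈ s, e k`. If the cocycle were the coboundary of a vector `v`, then comparing
both descriptions at the reflection `R` in the hyperplane orthogonal to `e k` would give
`R v - v = R (e k) - e k`. So `v - e k` would be fixed by `R`, that is, orthogonal to `e k`, and
every coefficient `⟪e k, v⟫` would be `1`, against Bessel's inequality.
-/

section DisplacementSum

variable {ι M F : Type*} [AddCommGroup M]

/-- The cocycle `β(f) = Σ_k (f (e k) - e k)` of a family `e`, as a function of a self-map `f`.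
Being a `finsum`, it has the junk value `0` when `f` moves infinitely many of the `e k`. -/
noncomputable def displacementSum (e : ι → M) (f : M → M) : M :=
  ∑ᶠ k, (f (e k) - e k)

theorem support_displacement (e : ι → M) (f : M → M) :
    (Function.support fun k => f (e k) - e k) = {k | f (e k) ≠ e k} := by
  ext k
  exact sub_ne_zero

variable [FunLike F M M] [AddMonoidHomClass F M M]

theorem displacementSum_comp (e : ι → M) (f : F) (g : M → M)
    (hf : {k | f (e k) ≠ e k}.Finite) (hg : {k | g (e k) ≠ e k}.Finite) :
    displacementSum e (f ∘ g) = displacementSum e f + f (displacementSum e g) := by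
  rw [← support_displacement] at hf hg
  have hfg : (Function.support fun k => f (g (e k) - e k)).Finite :=
    hg.subset (Function.support_comp_subset (map_zero f) _)
  calc
    displacementSum e (f ∘ g) = ∑ᶠ k, ((f (e k) - e k) + f (g (e k) - e k)) :=
      finsum_congr fun k => by rw [map_sub, Function.comp_apply]; abel
    _ = displacementSum e f + ∑ᶠ k, f (g (e k) - e k) := finsum_add_distrib hf hfg
    _ = displacementSum e f + f (displacementSum e g) :=
      congrArg _ (map_finsum f hg).symm

theorem displacementSum_eq_map_sum_sub_sum (e : ι → M) (f : F) (s : Finset ι)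
    (hf : ∀ k ∉ s, f (e k) = e k) :
    displacementSum e f = f (∑ k ∈ s, e k) - ∑ k ∈ s, e k := by
  have hs : (Function.support fun k => f (e k) - e k) ⊆ s := by
    rw [support_displacement]
    exact fun k hk => by_contra fun hks => hk (hf k hks)
  rw [displacementSum, finsum_eq_sum_of_support_subset _ hs, Finset.sum_sub_distrib, map_sum]

end DisplacementSum

section InnerProductSpace

variable {𝕜 ι E : Type*} [RCLike 𝕜] [NormedAddCommGroup E] [InnerProductSpace 𝕜 E]

theorem inner_eq_inner_self_of_reflection_sub_eq {a v : E}
    (h : (𝕜 ∙ a)ᗮ.reflection v - v = (𝕜 ∙ a)ᗮ.reflection a - a) :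
    inner 𝕜 a v = inner 𝕜 a a := by
  have hfixed : (𝕜 ∙ a)ᗮ.reflection (v - a) = v - a := by
    rw [map_sub]
    exact sub_eq_sub_iff_sub_eq_sub.mp h
  rw [Submodule.reflection_eq_self_iff, Submodule.mem_orthogonal_singleton_iff_inner_right,
    inner_sub_right] at hfixed
  exact sub_eq_zero.mp hfixed

theorem inner_eq_inner_self_of_displacementSum_eq {e : ι → E}
    (he : Pairwise fun i j => inner 𝕜 (e i) (e j) = 0) {v : E}
    (hv : ∀ u : E ≃ₗᵢ[𝕜] E, {k | u (e k) ≠ e k}.Finite → displacementSum e u = u v - v) (k : ι) :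
    inner 𝕜 (e k) v = inner 𝕜 (e k) (e k) := by
  set R : E ≃ₗᵢ[𝕜] E := (𝕜 ∙ e k)ᗮ.reflection
  have hR : ∀ j ∉ ({k} : Finset ι), R (e j) = e j := fun j hj =>
    Submodule.reflection_mem_subspace_eq_self <|
      Submodule.mem_orthogonal_singleton_iff_inner_right.mpr <|
        he (Ne.symm (Finset.notMem_singleton.mp hj))
  have hfin : {j | R (e j) ≠ e j}.Finite :=
    ({k} : Finset ι).finite_toSet.subset fun j hj => by_contra fun hjk => hj (hR j hjk)
  apply inner_eq_inner_self_of_reflection_sub_eq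
  rw [← hv R hfin, displacementSum_eq_map_sum_sub_sum e R {k} hR, Finset.sum_singleton]

theorem not_forall_inner_eq_one [Infinite ι] {e : ι → E} (he : Orthonormal 𝕜 e) (v : E) :
    ¬ ∀ k, inner 𝕜 (e k) v = 1 := by
  intro h
  have hsum : Summable fun k => ‖inner 𝕜 (e k) v‖ ^ 2 := he.inner_products_summable v
  simp only [h, norm_one, one_pow] at hsum
  exact one_ne_zero ((summable_const_iff _).mp hsum)

theorem orthonormal_lp_single [DecidableEq ι] :
    Orthonormal 𝕜 fun i : ι => (lp.single 2 i 1 : lp (fun _ : ι => 𝕜) 2) := by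
  rw [orthonormal_iff_ite]
  intro i j
  simp [lp.inner_single_left, lp.single_apply, Pi.single_apply]

theorem uInfty_natural_representation_cocycle_not_coboundary_general [Infinite ι] {e : ι → E}
    (he : Orthonormal 𝕜 e) :
    (∀ u v : E ≃ₗᵢ[𝕜] E, {k | u (e k) ≠ e k}.Finite → {k | v (e k) ≠ e k}.Finite →
      displacementSum e (u * v : E ≃ₗᵢ[𝕜] E) = displacementSum e u + u (displacementSum e v)) ∧
    (∀ (s : Finset ι) (u : E ≃ₗᵢ[𝕜] E), (∀ k ∉ s, u (e k) = e k) →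
      displacementSum e u = u (∑ k ∈ s, e k) - ∑ k ∈ s, e k) ∧
    ¬ ∃ v : E, ∀ u : E ≃ₗᵢ[𝕜] E, {k | u (e k) ≠ e k}.Finite → displacementSum e u = u v - v := by
  refine ⟨fun u v => displacementSum_comp e u v,
    fun s u => displacementSum_eq_map_sum_sub_sum e u s, ?_⟩
  rintro ⟨v, hv⟩
  refine not_forall_inner_eq_one he v fun k => ?_
  rw [inner_eq_inner_self_of_displacementSum_eq he.2 hv k]
  exact inner_self_eq_one_of_norm_eq_one (he.1 k)

end InnerProductSpace

/-- Let `H = ℓ²(ℕ, ℂ)` with standard Hilbert basis `(e k)` and let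
`U(∞)` be realized as the group of unitary operators (surjective linear isometries) `u` of `H`
with `u (e k) = e k` for all but finitely many `k`.  The map `β u := Σ_k (u (e k) - e k)`
(a finite sum) satisfies the 1-cocycle relation on `U(∞)`, its restriction to
`G_N = {u : u (e k) = e k for k > N}` is the coboundary of `v_N = Σ_{k ≤ N} e k`, but `β` is
not a 1-coboundary.  Hence the first cohomology of the natural representation of `U(∞)` on
`ℓ²(ℕ, ℂ)` (the highest weight representation of weight `(1,0,0,…)`) does not vanish. -/
theorem uInfty_natural_representation_cocycle_not_coboundary
    (e : ℕ → lp (fun _ : ℕ => ℂ) 2) (he : ∀ k, e k = lp.single 2 k (1 : ℂ))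
    (β : (lp (fun _ : ℕ => ℂ) 2 ≃ₗᵢ[ℂ] lp (fun _ : ℕ => ℂ) 2) → lp (fun _ : ℕ => ℂ) 2)
    (hβ : ∀ u, β u = ∑ᶠ k, (u (e k) - e k)) :
    -- the 1-cocycle relation holds on `U(∞)`:
    (∀ u v : lp (fun _ : ℕ => ℂ) 2 ≃ₗᵢ[ℂ] lp (fun _ : ℕ => ℂ) 2,
      {k : ℕ | u (e k) ≠ e k}.Finite → {k : ℕ | v (e k) ≠ e k}.Finite →
      β (u * v) = β u + u (β v))
    ∧
    -- on `G_N` the cocycle `β` is the coboundary of `v_N = Σ_{k ≤ N} e k`: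
    (∀ N : ℕ, ∀ u : lp (fun _ : ℕ => ℂ) 2 ≃ₗᵢ[ℂ] lp (fun _ : ℕ => ℂ) 2,
      (∀ k > N, u (e k) = e k) →
      β u = u (∑ k ∈ Finset.range (N + 1), e k) - ∑ k ∈ Finset.range (N + 1), e k)
    ∧
    -- but `β` is not a 1-coboundary on `U(∞)`:
    ¬ ∃ v : lp (fun _ : ℕ => ℂ) 2,
        ∀ u : lp (fun _ : ℕ => ℂ) 2 ≃ₗᵢ[ℂ] lp (fun _ : ℕ => ℂ) 2,
          {k : ℕ | u (e k) ≠ e k}.Finite → β u = u v - v := by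
  have hβ' : ∀ u, β u = displacementSum e u := hβ
  have he' : Orthonormal ℂ e := funext he ▸ orthonormal_lp_single
  simp only [hβ']
  obtain ⟨hcocycle, hcoboundary, hnot⟩ :=
    uInfty_natural_representation_cocycle_not_coboundary_general he'
  refine ⟨hcocycle, fun N u hu => hcoboundary (Finset.range (N + 1)) u fun k hk => hu k ?_, hnot⟩
  simpa using hk
end
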